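/- arXiv:2105.09804 — 6 statements merged into one kernel-verified Lean document; each statement's English description precedes it below -/
import Mathlib

section
/- Let h : (0,1) → (0,1) be a Borel measurable map that preserves the Lebesgue measure ℓ restricted to (0,1), and let j : (0,1] → ℝ be a Borel measurable map such that ℓ({x ∈ (0,1] : j(x) = c}) < 1 for every c ∈ ℝ. Then there do not exist Borel measurable functions f, g : (0,1) → (0,1) such that f(x) + g(y) = j(min{h(x)/y, (1 − h(x))/(1 − y)}) for all x, y ∈ (0,1). -/
open MeasureTheory Set

attribute [local instance] MeasureTheory.Measure.Subtype.measureSpace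

/-- Helper: the value `min (a/y) ((1-a)/(1-y))` lies in `(0,1]` for `a, y ∈ (0,1)`. -/
theorem min_div_mem_Ioc {a y : ℝ} (ha : a ∈ Set.Ioo (0:ℝ) 1) (hy : y ∈ Set.Ioo (0:ℝ) 1) :
    min (a / y) ((1 - a) / (1 - y)) ∈ Set.Ioc (0:ℝ) 1 := by
  obtain ⟨ha0, ha1⟩ := ha
  obtain ⟨hy0, hy1⟩ := hy
  constructor
  · exact lt_min (div_pos ha0 hy0) (div_pos (by linarith) (by linarith))
  · by_contra hcon
    push_neg at hcon
    have h1 : 1 < a / y := lt_of_lt_of_le hcon (min_le_left _ _)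
    have h2 : 1 < (1 - a) / (1 - y) := lt_of_lt_of_le hcon (min_le_right _ _)
    rw [lt_div_iff₀ hy0] at h1
    rw [lt_div_iff₀ (by linarith : (0:ℝ) < 1 - y)] at h2
    linarith

/-!
Write `K a` for the common value of `f` on the fibre `h = a`. For `a < y` the equation reads
`j (a / y) = K a + c y`, and for `a > y` it reads `j ((1 - a) / (1 - y)) = K a + c y`. Rescaling the
first form shows that `j s - j (s / 2)` is a.e. invariant under `s ↦ r * s`, hence a.e. a constant
`δ`, and then `K a - K (a / 2) = δ = K (1 - a) - K (1 - a / 2)` for a.e. `a`. These two relations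
say that `K ∘ D = K + δ` for the doubling map `D` of the circle, so `K` is a.e. constant because `D`
is ergodic, and therefore so is `j`.
-/

section AEConst

variable {X β : Type*} [MeasurableSpace X] {μ : Measure X} [MeasurableSpace β]

theorem ae_mem_of_measure_range_eq_univ {α : Type*} [IsFiniteMeasure μ] {h : α → X}
    (hrange : μ (range h) = μ univ) {S : Set X} (hS : MeasurableSet S) (hmem : ∀ x, h x ∈ S) :
    ∀ᵐ a ∂μ, a ∈ S := by
  rw [ae_mem_iff_measure_eq hS.nullMeasurableSet]
  exact le_antisymm (measure_mono (subset_univ _))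
    (hrange ▸ measure_mono (range_subset_iff.2 hmem))

theorem ae_eq_const_of_ae_eq_comp_mul [CommMagma X] [MeasurableMul₂ X] [SFinite μ] [NeZero μ]
    [MeasurableEq β] {F : X → β} (hF : Measurable F)
    (hinv : ∀ᵐ r ∂μ, ∀ᵐ s ∂μ, F s = F (r * s)) : ∃ c, ∀ᵐ s ∂μ, F s = c := by
  have hswap : ∀ᵐ s ∂μ, ∀ᵐ r ∂μ, F s = F (r * s) :=
    (Measure.ae_ae_comm (p := fun r s => F s = F (r * s)) (measurableSet_eq_fun
      (hF.comp measurable_snd) (hF.comp (measurable_fst.mul measurable_snd)))).1 hinv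
  obtain ⟨s₀, hs₀, hs₀'⟩ := (hinv.and hswap).exists
  refine ⟨F s₀, ?_⟩
  filter_upwards [hs₀, hs₀'] with s hs hs'
  rw [hs, hs', mul_comm]

theorem ae_eq_const_of_ergodic_of_le_comp [LinearOrder β] [TopologicalSpace β] [OrderTopology β]
    [SecondCountableTopology β] [OpensMeasurableSpace β] [Nonempty β] [IsFiniteMeasure μ]
    {T : X → X} (hT : Ergodic T μ) {F : X → β} (hF : Measurable F) (hle : F ≤ᵐ[μ] F ∘ T) :
    ∃ c, F =ᵐ[μ] Function.const X c := by
  refine Filter.exists_eventuallyEq_const_of_forall_separating (· ∈ range (Iio : β → Set β)) ?_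
  rintro _ ⟨c, rfl⟩
  have hpre : T ⁻¹' (F ⁻¹' Iio c) ≤ᵐ[μ] F ⁻¹' Iio c := by
    filter_upwards [hle] with x hx hlt using hx.trans_lt hlt
  rcases hT.ae_empty_or_univ_of_preimage_ae_le (hF measurableSet_Iio).nullMeasurableSet hpre with
    hempty | huniv
  · exact .inr (Filter.eventuallyEq_empty.1 hempty)
  · exact .inl (Filter.eventuallyEq_univ.1 huniv)

theorem ae_eq_const_of_ergodic_of_comp_eq_add_const [IsFiniteMeasure μ] {T : X → X}
    (hT : Ergodic T μ) {F : X → ℝ} (hF : Measurable F) {δ : ℝ}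
    (hadd : ∀ᵐ x ∂μ, F (T x) = F x + δ) : ∃ c, F =ᵐ[μ] Function.const X c := by
  rcases le_total 0 δ with hδ | hδ
  · refine ae_eq_const_of_ergodic_of_le_comp hT hF ?_
    filter_upwards [hadd] with x hx
    simpa only [Function.comp_apply, hx] using le_add_of_nonneg_right hδ
  · have hle : -F ≤ᵐ[μ] -F ∘ T := by
      filter_upwards [hadd] with x hx
      simpa only [Pi.neg_apply, Function.comp_apply, hx, neg_le_neg_iff] using
        add_le_of_nonpos_right hδ
    obtain ⟨c, hc⟩ := ae_eq_const_of_ergodic_of_le_comp hT hF.neg hle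
    exact ⟨-c, hc.mono fun x hx => neg_eq_iff_eq_neg.1 hx⟩

end AEConst

section Interval

theorem volume_univ_Ioo_zero_one : volume (univ : Set (Ioo (0 : ℝ) 1)) = 1 := by
  simp [Measure.Subtype.volume_univ measurableSet_Ioo.nullMeasurableSet]

theorem ae_restrict_Ioo_of_forall_lt {X : Type*} [LinearOrder X] [DenselyOrdered X]
    [TopologicalSpace X] [OrderTopology X] [TopologicalSpace.SeparableSpace X] [MeasurableSpace X]
    {μ : Measure X} {a b : X} {p : X → Prop}
    (hp : ∀ y ∈ Ioo a b, ∀ᵐ x ∂μ.restrict (Ioo a y), p x) :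
    ∀ᵐ x ∂μ.restrict (Ioo a b), p x := by
  obtain ⟨s, hs, hsd⟩ := TopologicalSpace.exists_countable_dense X
  have hcover : Ioo a b ⊆ ⋃ y ∈ s ∩ Ioo a b, Ioo a y := by
    intro x hx
    obtain ⟨y, hys, hxy, hyb⟩ := hsd.exists_between hx.2
    exact mem_biUnion ⟨hys, hx.1.trans hxy, hyb⟩ ⟨hx.1, hxy⟩
  refine ae_restrict_of_ae_restrict_of_subset hcover ?_
  rw [ae_restrict_biUnion_iff _ (hs.mono inter_subset_left)]
  exact fun y hy => hp y hy.2

theorem ae_restrict_comp_affine {u b : ℝ} (hu : u ≠ 0) {S T : Set ℝ}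
    (hmaps : MapsTo (fun s => u * s + b) S T) {p : ℝ → Prop}
    (hp : ∀ᵐ a ∂volume.restrict T, p a) : ∀ᵐ s ∂volume.restrict S, p (u * s + b) :=
  (((measurePreserving_add_right volume b).quasiMeasurePreserving.comp
    (Measure.quasiMeasurePreserving_smul volume hu)).restrict hmaps).ae hp

theorem ae_restrict_comp_mul_left {u : ℝ} (hu : u ≠ 0) {S T : Set ℝ} (hmaps : MapsTo (u * ·) S T)
    {p : ℝ → Prop} (hp : ∀ᵐ a ∂volume.restrict T, p a) : ∀ᵐ s ∂volume.restrict S, p (u * s) :=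
  ((Measure.quasiMeasurePreserving_smul volume hu).restrict hmaps).ae hp

theorem mul_mem_Ioo_zero_one {x y : ℝ} (hx : x ∈ Ioo (0 : ℝ) 1) (hy : y ∈ Ioo (0 : ℝ) 1) :
    x * y ∈ Ioo (0 : ℝ) 1 :=
  ⟨mul_pos hx.1 hy.1, mul_lt_one_of_nonneg_of_lt_one_left hx.1.le hx.2 hy.2.le⟩

theorem ae_restrict_Ioo_of_forall_comp_mul_left {p : ℝ → Prop}
    (hp : ∀ y ∈ Ioo (0 : ℝ) 1, ∀ᵐ s ∂volume.restrict (Ioo (0 : ℝ) 1), p (y * s)) :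
    ∀ᵐ a ∂volume.restrict (Ioo (0 : ℝ) 1), p a := by
  refine ae_restrict_Ioo_of_forall_lt fun y hy => ?_
  have hmaps : MapsTo (y⁻¹ * ·) (Ioo 0 y) (Ioo 0 1) := fun a ha =>
    ⟨mul_pos (inv_pos.2 hy.1) ha.1, (inv_mul_lt_one₀ hy.1).2 ha.2⟩
  simpa only [mul_inv_cancel_left₀ hy.1.ne'] using
    ae_restrict_comp_mul_left (inv_ne_zero hy.1.ne') hmaps (hp y hy)

end Interval

section Doubling

variable {β : Type*}

theorem ae_unitAddCircle_of_ae_restrict_Ioo {p : UnitAddCircle → Prop}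
    (hpm : MeasurableSet {z | p z})
    (hp : ∀ᵐ (x : ℝ) ∂volume.restrict (Ioo (0 : ℝ) 1), p x) : ∀ᵐ z : UnitAddCircle, p z := by
  have hmk := UnitAddCircle.measurePreserving_mk 0
  rw [zero_add, ← Measure.restrict_congr_set Ioo_ae_eq_Ioc] at hmk
  rwa [← hmk.map_eq, ae_map_iff hmk.measurable.aemeasurable hpm]

theorem measurable_liftIoc {T : ℝ} [Fact (0 < T)] (a : ℝ) [MeasurableSpace β] {F : ℝ → β}
    (hF : Measurable F) : Measurable (AddCircle.liftIoc T a F) :=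
  hF.comp (measurable_subtype_coe.comp (AddCircle.measurableEquivIoc T a).measurable)

theorem liftIoc_two_nsmul_of_lt {F : ℝ → β} {x : ℝ} (hx : x ∈ Ioo (0 : ℝ) (1 / 2)) :
    AddCircle.liftIoc 1 0 F (2 • (x : UnitAddCircle)) = F (2 * x) := by
  rw [← AddCircle.coe_nsmul, nsmul_eq_mul, Nat.cast_ofNat]
  exact AddCircle.liftIoc_coe_apply ⟨by linarith [hx.1], by linarith [hx.2]⟩

theorem liftIoc_two_nsmul_of_gt {F : ℝ → β} {x : ℝ} (hx : x ∈ Ioo (1 / 2 : ℝ) 1) :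
    AddCircle.liftIoc 1 0 F (2 • (x : UnitAddCircle)) = F (2 * x - 1) := by
  have hcoe : 2 • (x : UnitAddCircle) = ((2 * x - 1 : ℝ) : UnitAddCircle) := by
    rw [AddCircle.coe_sub, AddCircle.coe_period, sub_zero, two_mul, two_nsmul, AddCircle.coe_add]
  rw [hcoe]
  exact AddCircle.liftIoc_coe_apply ⟨by linarith [hx.1], by linarith [hx.2]⟩

theorem ae_eq_const_of_doubling_eq_add_const {F : ℝ → ℝ} (hF : Measurable F) {δ : ℝ}
    (hleft : ∀ᵐ x ∂volume.restrict (Ioo (0 : ℝ) (1 / 2)), F (2 * x) = F x + δ)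
    (hright : ∀ᵐ x ∂volume.restrict (Ioo (1 / 2 : ℝ) 1), F (2 * x - 1) = F x + δ) :
    ∃ c, ∀ᵐ x ∂volume.restrict (Ioo (0 : ℝ) 1), F x = c := by
  set G : UnitAddCircle → ℝ := AddCircle.liftIoc 1 0 F with hG
  have hGF : ∀ x : ℝ, x ∈ Ioo (0 : ℝ) 1 → G x = F x := fun x hx =>
    AddCircle.liftIoc_coe_apply ⟨hx.1, by linarith [hx.2]⟩
  have hGm : Measurable G := measurable_liftIoc 0 hF
  have hdouble : ∀ᵐ (x : ℝ) ∂volume.restrict (Ioo (0 : ℝ) 1),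
      G (2 • (x : UnitAddCircle)) = G x + δ := by
    rw [ae_restrict_iff' measurableSet_Ioo] at hleft hright ⊢
    filter_upwards [hleft, hright, Measure.ae_ne volume (1 / 2)] with x hl hr hne hx
    rw [hGF x hx]
    rcases hne.lt_or_gt with hlt | hgt
    · rw [hG, liftIoc_two_nsmul_of_lt ⟨hx.1, hlt⟩, hl ⟨hx.1, hlt⟩]
    · rw [hG, liftIoc_two_nsmul_of_gt ⟨hgt, hx.2⟩, hr ⟨hgt, hx.2⟩]
  have hGdouble : ∀ᵐ z : UnitAddCircle, G (2 • z) = G z + δ :=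
    ae_unitAddCircle_of_ae_restrict_Ioo
      (measurableSet_eq_fun (hGm.comp (measurable_const_smul 2)) (hGm.add_const δ)) hdouble
  obtain ⟨c, hc⟩ := ae_eq_const_of_ergodic_of_comp_eq_add_const
    (AddCircle.ergodic_nsmul one_lt_two) hGm hGdouble
  refine ⟨c, ?_⟩
  have hcIoc := (UnitAddCircle.measurePreserving_mk 0).quasiMeasurePreserving.ae hc
  rw [zero_add] at hcIoc
  filter_upwards [ae_restrict_of_ae_restrict_of_subset Ioo_subset_Ioc_self hcIoc,
    ae_restrict_mem measurableSet_Ioo] with x hx hmem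
  exact (hGF x hmem).symm.trans hx

end Doubling

/-- `J (a / y) = K a + c y` for all `y ∈ (0, 1)` and a.e. `a ∈ (0, y)`, an equation of Pexider type,
with `a = y * s` substituted. -/
def IsAEPexiderSolution (J K : ℝ → ℝ) : Prop :=
  ∀ y ∈ Ioo (0 : ℝ) 1, ∃ c, ∀ᵐ s ∂volume.restrict (Ioo (0 : ℝ) 1), J s = K (y * s) + c

namespace IsAEPexiderSolution

variable {J K : ℝ → ℝ}

theorem sub_comp_mul_eq (hJK : IsAEPexiderSolution J K) {r y : ℝ} (hr : r ∈ Ioo (0 : ℝ) 1)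
    (hy : y ∈ Ioo (0 : ℝ) 1) :
    ∀ᵐ s ∂volume.restrict (Ioo (0 : ℝ) 1), J s - J (r * s) = K (y * s) - K (r * (y * s)) := by
  obtain ⟨c, hc⟩ := hJK y hy
  filter_upwards [hc, ae_restrict_comp_mul_left hr.1.ne' (fun _ => mul_mem_Ioo_zero_one hr) hc]
    with s hs hrs
  rw [hs, hrs, mul_left_comm, add_sub_add_right_eq_sub]

theorem exists_sub_comp_mul_eq_const (hJK : IsAEPexiderSolution J K) (hJ : Measurable J) {r : ℝ}
    (hr : r ∈ Ioo (0 : ℝ) 1) :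
    ∃ δ, ∀ᵐ s ∂volume.restrict (Ioo (0 : ℝ) 1), J s - J (r * s) = δ := by
  have : NeZero (volume.restrict (Ioo (0 : ℝ) 1)) := ⟨by simp [Measure.restrict_eq_zero]⟩
  refine ae_eq_const_of_ae_eq_comp_mul (hJ.sub (hJ.comp (measurable_const_mul r))) ?_
  filter_upwards [ae_restrict_mem measurableSet_Ioo] with q hq
  have hhalf : (1 / 2 : ℝ) ∈ Ioo (0 : ℝ) 1 := by norm_num
  filter_upwards [hJK.sub_comp_mul_eq hr (mul_mem_Ioo_zero_one hhalf hq),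
    ae_restrict_comp_mul_left hq.1.ne' (fun _ => mul_mem_Ioo_zero_one hq)
      (hJK.sub_comp_mul_eq hr hhalf)] with s hs hqs
  rw [hs, hqs, mul_assoc]

theorem sub_comp_mul_eq_const (hJK : IsAEPexiderSolution J K) {r δ : ℝ} (hr : r ∈ Ioo (0 : ℝ) 1)
    (hδ : ∀ᵐ s ∂volume.restrict (Ioo (0 : ℝ) 1), J s - J (r * s) = δ) :
    ∀ᵐ a ∂volume.restrict (Ioo (0 : ℝ) 1), K a - K (r * a) = δ := by
  refine ae_restrict_Ioo_of_forall_comp_mul_left fun y hy => ?_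
  filter_upwards [hδ, hJK.sub_comp_mul_eq hr hy] with s hs hys
  rw [← hys, hs]

theorem ae_eq_const (hJK : IsAEPexiderSolution J K) (hJ : Measurable J) (hK : Measurable K)
    (hJK' : IsAEPexiderSolution J fun a => K (1 - a)) :
    ∃ C, ∀ᵐ s ∂volume.restrict (Ioo (0 : ℝ) 1), J s = C := by
  have hhalf : (1 / 2 : ℝ) ∈ Ioo (0 : ℝ) 1 := by norm_num
  obtain ⟨δ, hδ⟩ := hJK.exists_sub_comp_mul_eq_const hJ hhalf
  have hleft : ∀ᵐ x ∂volume.restrict (Ioo (0 : ℝ) (1 / 2)), K (2 * x) = K x + δ := by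
    have hmaps : MapsTo (2 * ·) (Ioo (0 : ℝ) (1 / 2)) (Ioo 0 1) := fun x hx =>
      ⟨by linarith [hx.1], by linarith [hx.2]⟩
    filter_upwards [ae_restrict_comp_mul_left two_ne_zero hmaps
      (hJK.sub_comp_mul_eq_const hhalf hδ)] with x hx
    rw [show 1 / 2 * (2 * x) = x by ring] at hx
    linarith
  have hright : ∀ᵐ x ∂volume.restrict (Ioo (1 / 2 : ℝ) 1), K (2 * x - 1) = K x + δ := by
    have hmaps : MapsTo (fun x => -2 * x + 2) (Ioo (1 / 2 : ℝ) 1) (Ioo 0 1) := fun x hx =>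
      ⟨by linarith [hx.2], by linarith [hx.1]⟩
    filter_upwards [ae_restrict_comp_affine (by norm_num) hmaps
      (hJK'.sub_comp_mul_eq_const hhalf hδ)] with x hx
    rw [show 1 - (-2 * x + 2) = 2 * x - 1 by ring,
      show 1 - 1 / 2 * (-2 * x + 2) = x by ring] at hx
    linarith
  obtain ⟨κ, hκ⟩ := ae_eq_const_of_doubling_eq_add_const hK hleft hright
  obtain ⟨c, hc⟩ := hJK (1 / 2) hhalf
  refine ⟨κ + c, ?_⟩
  filter_upwards [hc, ae_restrict_comp_mul_left hhalf.1.ne'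
    (fun _ => mul_mem_Ioo_zero_one hhalf) hκ] with s hs hκs
  rw [hs, hκs]

end IsAEPexiderSolution

section MinRatio

/-- The kernel `min {a / y, (1 - a) / (1 - y)}` through which the two variables interact. -/
noncomputable def minRatio (a y : ℝ) : ℝ :=
  min (a / y) ((1 - a) / (1 - y))

theorem minRatio_one_sub (a y : ℝ) : minRatio (1 - a) (1 - y) = minRatio a y := by
  rw [minRatio, minRatio, sub_sub_cancel, sub_sub_cancel, min_comm]

theorem minRatio_mul_left {y s : ℝ} (hy : y ∈ Ioo (0 : ℝ) 1) (hs : s ≤ 1) :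
    minRatio (y * s) y = s := by
  rw [minRatio, mul_div_cancel_left₀ s hy.1.ne', min_eq_left]
  rw [le_div_iff₀ (sub_pos.2 hy.2)]
  linarith

theorem measurable_minRatio_left (y : ℝ) : Measurable fun a => minRatio a y :=
  (measurable_id.div_const y).min ((measurable_const.sub measurable_id).div_const (1 - y))

/-- `J (minRatio a y) = K a + c y` for all `y ∈ (0, 1)` and a.e. `a ∈ (0, 1)`; no regularity of
`y ↦ c y` is required. -/
def IsAEMinRatioSolution (J K : ℝ → ℝ) : Prop :=
  ∀ y ∈ Ioo (0 : ℝ) 1, ∃ c, ∀ᵐ a ∂volume.restrict (Ioo (0 : ℝ) 1), J (minRatio a y) = K a + c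

namespace IsAEMinRatioSolution

variable {J K : ℝ → ℝ}

theorem isAEPexiderSolution (hJK : IsAEMinRatioSolution J K) : IsAEPexiderSolution J K := by
  intro y hy
  obtain ⟨c, hc⟩ := hJK y hy
  refine ⟨c, ?_⟩
  filter_upwards [ae_restrict_comp_mul_left hy.1.ne' (fun _ => mul_mem_Ioo_zero_one hy) hc,
    ae_restrict_mem measurableSet_Ioo] with s hs hmem
  rwa [minRatio_mul_left hy hmem.2.le] at hs

theorem comp_one_sub (hJK : IsAEMinRatioSolution J K) :
    IsAEMinRatioSolution J fun a => K (1 - a) := by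
  intro y hy
  obtain ⟨c, hc⟩ := hJK (1 - y) (Ioo.one_sub_mem hy)
  refine ⟨c, ?_⟩
  have hmaps : MapsTo (fun a => -1 * a + 1) (Ioo (0 : ℝ) 1) (Ioo 0 1) := fun a ha =>
    ⟨by linarith [ha.2], by linarith [ha.1]⟩
  filter_upwards [ae_restrict_comp_affine (by norm_num) hmaps hc] with a ha
  rwa [neg_one_mul, neg_add_eq_sub, minRatio_one_sub] at ha

theorem ae_eq_const (hJK : IsAEMinRatioSolution J K) (hJ : Measurable J) (hK : Measurable K) :
    ∃ C, ∀ᵐ s ∂volume.restrict (Ioo (0 : ℝ) 1), J s = C :=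
  hJK.isAEPexiderSolution.ae_eq_const hJ hK hJK.comp_one_sub.isAEPexiderSolution

end IsAEMinRatioSolution

theorem exists_isAEMinRatioSolution {α : Type*} {h : α → Ioo (0 : ℝ) 1}
    (hrange : volume (range h) = 1) {J : ℝ → ℝ} (hJ : Measurable J) {f : α → ℝ}
    {g : Ioo (0 : ℝ) 1 → ℝ} (hfg : ∀ x y, f x + g y = J (minRatio (h x) y)) :
    ∃ K, Measurable K ∧ IsAEMinRatioSolution J K := by
  have hJm (y : ℝ) : Measurable fun a => J (minRatio a y) := hJ.comp (measurable_minRatio_left y)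
  refine ⟨fun a => J (minRatio a (1 / 2)), hJm _, fun y hy => ?_⟩
  let half : Ioo (0 : ℝ) 1 := ⟨1 / 2, by norm_num⟩
  refine ⟨g ⟨y, hy⟩ - g half, ?_⟩
  rw [ae_restrict_iff_subtype measurableSet_Ioo]
  have : IsFiniteMeasure (volume : Measure (Ioo (0 : ℝ) 1)) :=
    ⟨volume_univ_Ioo_zero_one.trans_lt ENNReal.one_lt_top⟩
  refine ae_mem_of_measure_range_eq_univ (hrange.trans volume_univ_Ioo_zero_one.symm)
    (measurable_subtype_coe (measurableSet_eq_fun (hJm y) ((hJm (1 / 2)).add_const _))) fun x => ?_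
  change J (minRatio (h x) y) = J (minRatio (h x) half) + (g ⟨y, hy⟩ - g half)
  rw [← hfg x half, ← hfg x ⟨y, hy⟩]
  ring

end MinRatio

theorem volume_setOf_Ioc_eq_one {p : ℝ → Prop}
    (hp : ∀ᵐ s ∂volume.restrict (Ioo (0 : ℝ) 1), p s) :
    volume {x : Ioc (0 : ℝ) 1 | p x} = 1 := by
  rw [Measure.restrict_congr_set Ioo_ae_eq_Ioc, ae_restrict_iff_subtype measurableSet_Ioc] at hp
  calc volume {x : Ioc (0 : ℝ) 1 | p x} = volume (univ : Set (Ioc (0 : ℝ) 1)) :=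
        measure_congr (Filter.eventuallyEq_univ.2 hp)
    _ = 1 := by simp [Measure.Subtype.volume_univ measurableSet_Ioc.nullMeasurableSet]

theorem volume_range_eq_one {h : Ioo (0 : ℝ) 1 → Ioo (0 : ℝ) 1}
    (hpres : ∀ A : Set (Ioo (0 : ℝ) 1), MeasurableSet A → volume (h ⁻¹' A) = volume A) :
    volume (range h) = 1 := by
  have hpre : h ⁻¹' toMeasurable volume (range h) = univ :=
    eq_univ_of_forall fun x => subset_toMeasurable volume _ (mem_range_self x)
  rw [← measure_toMeasurable, ← hpres _ (measurableSet_toMeasurable _ _), hpre,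
    volume_univ_Ioo_zero_one]

theorem no_measurable_solution_uniform_min_general {α : Type*} (h : α → Ioo (0 : ℝ) 1)
    (hrange : volume (range h) = 1) (j : Ioc (0 : ℝ) 1 → ℝ) (hj : Measurable j)
    (hjc : ∀ c : ℝ, volume {x : Ioc (0 : ℝ) 1 | j x = c} < 1) :
    ¬ ∃ (f : α → ℝ) (g : Ioo (0 : ℝ) 1 → ℝ), ∀ x y,
      f x + g y = j ⟨min ((h x : ℝ) / y) ((1 - h x) / (1 - y)),
        min_div_mem_Ioc (h x).2 y.2⟩ := by
  rintro ⟨f, g, hfg⟩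
  obtain ⟨J, hJ, rfl⟩ :=
    (MeasurableEmbedding.subtype_coe measurableSet_Ioc).exists_measurable_extend hj
      fun _ => inferInstance
  obtain ⟨K, hK, hJK⟩ := exists_isAEMinRatioSolution hrange hJ hfg
  obtain ⟨C, hC⟩ := hJK.ae_eq_const hJ hK
  exact (hjc C).ne (volume_setOf_Ioc_eq_one hC)

theorem no_measurable_solution_uniform_min
    (h : Set.Ioo (0:ℝ) 1 → Set.Ioo (0:ℝ) 1) (hh : Measurable h)
    (hpres : ∀ A : Set (Set.Ioo (0:ℝ) 1), MeasurableSet A → volume (h ⁻¹' A) = volume A)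
    (j : Set.Ioc (0:ℝ) 1 → ℝ) (hj : Measurable j)
    (hjc : ∀ c : ℝ, volume {x : Set.Ioc (0:ℝ) 1 | j x = c} < 1) :
    ¬ ∃ f g : Set.Ioo (0:ℝ) 1 → Set.Ioo (0:ℝ) 1, Measurable f ∧ Measurable g ∧
      ∀ x y : Set.Ioo (0:ℝ) 1,
        (f x : ℝ) + (g y : ℝ) =
          j ⟨min ((h x : ℝ) / (y : ℝ)) ((1 - (h x : ℝ)) / (1 - (y : ℝ))),
             min_div_mem_Ioc (h x).2 y.2⟩ := by
  rintro ⟨f, g, -, -, hfg⟩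
  exact no_measurable_solution_uniform_min_general h (volume_range_eq_one hpres) j hj hjc
    ⟨fun x => f x, fun y => g y, hfg⟩
end

section
/- Let h : (0,1) → (0,1) be a Borel measurable map that preserves the Lebesgue measure ℓ restricted to (0,1), and let j : [0,1) → ℝ be a Borel measurable map such that ℓ({x ∈ [0,1) : j(x) = c}) < 1 for every c ∈ ℝ. Then there do not exist Borel measurable functions f, g : (0,1) → (0,1) such that f(x) + g(y) = j(frac(h(x) + y)) for all x, y ∈ (0,1), where frac(z) denotes the fractional part of z. -/
open MeasureTheory Set

attribute [local instance] MeasureTheory.Measure.Subtype.measureSpace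

/-!
Read on the circle `ℝ / ℤ`, the equation is `F (h x + y) = f x + g y`, so translating `F` by
`h x - h x'` adds the constant `f x - f x'` to it. Translations preserve the finite Haar measure,
hence these constants vanish: the law of `F` is a finite measure on the line, which no nontrivial
translation preserves. Thus `F` is almost everywhere invariant under all differences `h x - h x'`.
As soon as `h` takes infinitely many values, these generate a dense subgroup of the circle, and by
ergodicity `F` is almost everywhere constant. A map preserving a nonzero measure without atoms
takes infinitely many values.
-/

section MeasurePreserving

variable {α : Type*} [MeasurableSpace α] {μ : Measure α} {T : α → α} {F : α → ℝ}

theorem comp_ae_eq_of_ae_le_comp [IsFiniteMeasure μ] (hT : MeasurePreserving T μ μ)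
    (hF : AEMeasurable F μ) (hle : F ≤ᵐ[μ] F ∘ T) : F ∘ T =ᵐ[μ] F := by
  -- Composing with `arctan` makes `F` integrable and keeps its order.
  have arctan_integrable {G : α → ℝ} (hG : AEMeasurable G μ) :
      Integrable (fun x ↦ Real.arctan (G x)) μ :=
    .of_bound (Real.measurable_arctan.comp_aemeasurable hG).aestronglyMeasurable (Real.pi / 2) <|
      .of_forall fun x ↦ abs_le.2
        ⟨(Real.neg_pi_div_two_lt_arctan _).le, (Real.arctan_lt_pi_div_two _).le⟩
  have hFT : AEMeasurable (F ∘ T) μ := hF.comp_quasiMeasurePreserving hT.quasiMeasurePreserving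
  have integral_eq : ∫ x, Real.arctan (F x) ∂μ = ∫ x, Real.arctan ((F ∘ T) x) ∂μ := by
    have hmap := integral_map (μ := μ) (φ := T) (f := fun x ↦ Real.arctan (F x))
      hT.aemeasurable (by simpa only [hT.map_eq] using (arctan_integrable hF).1)
    rwa [hT.map_eq] at hmap
  have arctan_eq := (integral_eq_iff_of_ae_le (arctan_integrable hF) (arctan_integrable hFT)
    (hle.mono fun _ hx ↦ Real.arctan_strictMono.monotone hx)).1 integral_eq
  exact arctan_eq.mono fun _ hx ↦ (Real.arctan_injective hx).symm

theorem eq_zero_of_comp_ae_eq_add_const [IsFiniteMeasure μ] [NeZero μ]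
    (hT : MeasurePreserving T μ μ) (hF : AEMeasurable F μ) {c : ℝ}
    (hc : F ∘ T =ᵐ[μ] fun x ↦ F x + c) : c = 0 := by
  have comp_eq : F ∘ T =ᵐ[μ] F := by
    rcases le_total 0 c with hc₀ | hc₀
    · refine comp_ae_eq_of_ae_le_comp hT hF ?_
      filter_upwards [hc] with x hx
      linarith
    · have neg_comp_eq : (-F) ∘ T =ᵐ[μ] -F := by
        refine comp_ae_eq_of_ae_le_comp hT hF.neg ?_
        filter_upwards [hc] with x hx
        simp only [Function.comp_apply, Pi.neg_apply] at hx ⊢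
        linarith
      exact neg_comp_eq.mono fun x hx ↦ neg_injective hx
  obtain ⟨x, hx, hx'⟩ := (hc.and comp_eq).exists
  linarith

theorem infinite_range_of_quasiMeasurePreserving {β : Type*} [MeasurableSpace β] {ν : Measure β}
    [NeZero μ] [NullSingletonClass ν] {h : α → β} (hh : Measure.QuasiMeasurePreserving h μ ν) :
    (range h).Infinite := by
  intro hfin
  have hnull := hh.preimage_null (hfin.measure_zero ν)
  rw [preimage_range] at hnull
  exact NeZero.ne μ (Measure.measure_univ_eq_zero.1 hnull)

theorem infinite_range_fract_of_quasiMeasurePreserving [NeZero μ] {h : α → Ioo (0 : ℝ) 1}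
    (hh : Measure.QuasiMeasurePreserving h μ) : (range fun x ↦ Int.fract (h x : ℝ)).Infinite := by
  have range_infinite : (range fun x ↦ (h x : ℝ)).Infinite :=
    infinite_range_of_quasiMeasurePreserving <|
      (measurePreserving_subtype_coe measurableSet_Ioo).quasiMeasurePreserving.comp hh
  simpa only [Int.fract_eq_self.2 (Ioo_subset_Ico_self (h _).2)] using range_infinite

theorem neZero_volume_Ioo {a b : ℝ} (hab : a < b) : NeZero (volume : Measure (Ioo a b)) where
  out := by
    simpa [← Measure.measure_univ_ne_zero, Measure.Subtype.volume_univ nullMeasurableSet_Ioo]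

end MeasurePreserving

section Ergodic

variable {G X : Type*} [AddGroup G] [TopologicalSpace G] [ContinuousNeg G]
  [TopologicalSpace X] [R1Space X] [MeasurableSpace X] [BorelSpace X]
  [AddAction G X] [ContinuousVAdd G X]
  {μ : Measure X} [IsFiniteMeasure μ] [μ.InnerRegular] [ErgodicVAdd G X μ]
  {s : Set G}

theorem exists_ae_eq_const_of_comp_vadd_ae_eq {Y : Type*} [Nonempty Y] [MeasurableSpace Y]
    [MeasurableSpace.CountablySeparated Y] {F : X → Y} (hF : NullMeasurable F μ)
    (hs : Dense (AddSubgroup.closure s : Set G))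
    (hinv : ∀ d ∈ s, (fun x ↦ F (d +ᵥ x)) =ᵐ[μ] F) : ∃ c, F =ᵐ[μ] Function.const X c := by
  refine Filter.exists_eventuallyEq_const_of_forall_separating MeasurableSet fun U hU ↦ ?_
  have closure_le : AddSubgroup.closure s ≤ AddAction.aestabilizer G μ (F ⁻¹' U) := by
    refine (AddSubgroup.closure_le _).2 fun d hd ↦ neg_mem_iff.1 ?_
    rw [AddAction.mem_aestabilizer, ← preimage_vadd]
    filter_upwards [hinv d hd] with x hx
    exact congrArg (· ∈ U) hx
  exact Filter.eventuallyConst_set.1 <|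
    aeconst_of_dense_aestabilizer_vadd (hF hU) (hs.mono closure_le)

theorem exists_ae_eq_const_of_comp_vadd_ae_eq_add_const [NeZero μ] {F : X → ℝ}
    (hF : AEMeasurable F μ) (hs : Dense (AddSubgroup.closure s : Set G))
    (hadd : ∀ d ∈ s, ∃ c, (fun x ↦ F (d +ᵥ x)) =ᵐ[μ] fun x ↦ F x + c) :
    ∃ c, F =ᵐ[μ] Function.const X c := by
  refine exists_ae_eq_const_of_comp_vadd_ae_eq hF.nullMeasurable hs fun d hd ↦ ?_
  obtain ⟨c, hc⟩ := hadd d hd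
  obtain rfl : c = 0 := eq_zero_of_comp_ae_eq_add_const (measurePreserving_vadd d μ) hF hc
  simpa only [add_zero] using hc

end Ergodic

section Circle

variable {p : ℝ} [Fact (0 < p)] {ι : Type*}

theorem dense_addSubgroup_addCircle_of_infinite
    {H : AddSubgroup (AddCircle p)} (hH : (H : Set (AddCircle p)).Infinite) :
    Dense (H : Set (AddCircle p)) := by
  rw [AddCircle.dense_addSubgroup_iff_ne_zmultiples]
  rintro a ha rfl
  exact hH (finite_zmultiples.2 (addOrderOf_ne_zero_iff.1 ha))

variable (p) in
theorem measurePreserving_coe_Ico_addCircle :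
    MeasurePreserving (fun x : Ico 0 p ↦ ((x : ℝ) : AddCircle p)) := by
  have restrict_eq : (volume : Measure ℝ).restrict (Ioc 0 (0 + p)) = volume.restrict (Ico 0 p) := by
    rw [zero_add, restrict_Ico_eq_restrict_Ioc]
  exact (restrict_eq ▸ AddCircle.measurePreserving_mk p 0).comp
    (measurePreserving_subtype_coe measurableSet_Ico)

theorem nullSingletonClass_volume_addCircle :
    NullSingletonClass (volume : Measure (AddCircle p)) where
  measure_singleton x := by
    simpa [(Fact.out : 0 < p).le] using AddCircle.volume_closedBall p (x := x) 0

theorem comp_vadd_ae_eq_add_const_of_forall_add_eq {a : ι → AddCircle p}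
    {F : AddCircle p → ℝ} {f : ι → ℝ} {g : Ioo 0 p → ℝ}
    (hadd : ∀ i (y : Ioo 0 p), f i + g y = F (a i + (y : ℝ))) (i k : ι) :
    (fun t ↦ F ((a i - a k) +ᵥ t)) =ᵐ[volume] fun t ↦ F t + (f i - f k) := by
  have := nullSingletonClass_volume_addCircle (p := p)
  filter_upwards [Measure.ae_ne volume (a k)] with t ht
  obtain ⟨y, hy, hyt⟩ : ∃ y ∈ Ioo 0 p, (y : AddCircle p) = t - a k := by
    simpa using! (AddCircle.openPartialHomeomorphCoe p 0).surjOn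
      (show t - a k ∈ ({((0 : ℝ) : AddCircle p)}ᶜ : Set _) from sub_ne_zero.2 ht)
  have hi := hadd i ⟨y, hy⟩
  have hk := hadd k ⟨y, hy⟩
  simp only [hyt, add_sub_cancel] at hi hk
  rw [vadd_eq_add, sub_add_eq_add_sub, add_sub_assoc]
  linarith

theorem exists_ae_eq_const_of_forall_add_eq {a : ι → AddCircle p}
    (ha : (range a).Infinite) {F : AddCircle p → ℝ} (hF : AEMeasurable F)
    {f : ι → ℝ} {g : Ioo 0 p → ℝ}
    (hadd : ∀ i (y : Ioo 0 p), f i + g y = F (a i + (y : ℝ))) :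
    ∃ c, F =ᵐ[volume] Function.const _ c := by
  obtain ⟨-, k, rfl⟩ := ha.nonempty
  have differences_infinite : (range fun i ↦ a i - a k).Infinite := by
    have himage := ha.image (sub_left_injective (b := a k)).injOn
    rwa [← range_comp] at himage
  have closure_dense := dense_addSubgroup_addCircle_of_infinite <|
    differences_infinite.mono AddSubgroup.subset_closure
  refine exists_ae_eq_const_of_comp_vadd_ae_eq_add_const hF closure_dense ?_
  rintro - ⟨i, rfl⟩
  exact ⟨f i - f k, comp_vadd_ae_eq_add_const_of_forall_add_eq hadd i k⟩

end Circle

section CircleLift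

variable {ι α : Type*}

/-- The function on the circle `ℝ / ℤ` which is represented by `j` on the fundamental domain
`[0, 1)`. It is written through `Int.fract` so that it unfolds to `j (frac x)` at the class
of `x`. -/
noncomputable def circleLift (j : Ico (0 : ℝ) 1 → α) : UnitAddCircle → α :=
  Function.Periodic.lift (c := (1 : ℝ))
    (f := fun x ↦ j ⟨Int.fract x, Int.fract_nonneg x, Int.fract_lt_one x⟩)
    fun x ↦ by simp only [Int.fract_add_one]

theorem circleLift_coe (j : Ico (0 : ℝ) 1 → α) (x : ℝ) :
    circleLift j x = j ⟨Int.fract x, Int.fract_nonneg x, Int.fract_lt_one x⟩ :=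
  rfl

theorem circleLift_coe_Ico (j : Ico (0 : ℝ) 1 → α) (x : Ico (0 : ℝ) 1) :
    circleLift j (x : ℝ) = j x := by
  simp only [circleLift_coe, Int.fract_eq_self.2 x.2]

theorem measurable_circleLift [MeasurableSpace α] {j : Ico (0 : ℝ) 1 → α} (hj : Measurable j) :
    Measurable (circleLift j) :=
  QuotientAddGroup.measurable_from_quotient.2 <| hj.comp measurable_fract.subtype_mk

theorem infinite_range_coe_unitAddCircle {h : ι → ℝ}
    (hinf : (range fun i ↦ Int.fract (h i)).Infinite) :
    (range fun i ↦ (h i : UnitAddCircle)).Infinite := by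
  refine .of_image (circleLift Subtype.val) ?_
  rwa [← range_comp]

theorem ae_eq_const_of_circleLift_ae_eq_const {j : Ico (0 : ℝ) 1 → α} {c : α}
    (hc : circleLift j =ᵐ[volume] Function.const _ c) : ∀ᵐ x, j x = c := by
  filter_upwards [(measurePreserving_coe_Ico_addCircle 1).quasiMeasurePreserving.ae hc] with x hx
  rwa [circleLift_coe_Ico] at hx

end CircleLift

theorem no_measurable_solution_uniform_fract_general {ι : Type*} (h : ι → ℝ)
    (hinf : (range fun i ↦ Int.fract (h i)).Infinite)
    (j : Ico (0 : ℝ) 1 → ℝ) (hj : Measurable j)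
    (hjc : ∀ c : ℝ, volume {x : Ico (0 : ℝ) 1 | j x = c} < 1) :
    ¬ ∃ (f : ι → ℝ) (g : Ioo (0 : ℝ) 1 → ℝ), ∀ (i : ι) (y : Ioo (0 : ℝ) 1),
      f i + g y = j ⟨Int.fract (h i + y), Int.fract_nonneg _, Int.fract_lt_one _⟩ := by
  rintro ⟨f, g, hfg⟩
  have range_infinite : (range fun i ↦ (h i : UnitAddCircle)).Infinite :=
    infinite_range_coe_unitAddCircle hinf
  obtain ⟨c, hc⟩ := exists_ae_eq_const_of_forall_add_eq range_infinite
    (measurable_circleLift hj).aemeasurable (f := f) (g := g) hfg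
  have j_ae_eq : ∀ᵐ x, j x = c := ae_eq_const_of_circleLift_ae_eq_const hc
  have measure_univ_eq : volume (univ : Set (Ico (0 : ℝ) 1)) = 1 := by
    rw [Measure.Subtype.volume_univ nullMeasurableSet_Ico, Real.volume_Ico]
    norm_num
  exact (hjc c).ne ((measure_congr (Filter.eventuallyEq_univ.2 j_ae_eq)).trans measure_univ_eq)

theorem no_measurable_solution_uniform_fract
    (h : Set.Ioo (0:ℝ) 1 → Set.Ioo (0:ℝ) 1) (hh : Measurable h)
    (hpres : ∀ A : Set (Set.Ioo (0:ℝ) 1), MeasurableSet A → volume (h ⁻¹' A) = volume A)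
    (j : Set.Ico (0:ℝ) 1 → ℝ) (hj : Measurable j)
    (hjc : ∀ c : ℝ, volume {x : Set.Ico (0:ℝ) 1 | j x = c} < 1) :
    ¬ ∃ f g : Set.Ioo (0:ℝ) 1 → Set.Ioo (0:ℝ) 1, Measurable f ∧ Measurable g ∧
      ∀ x y : Set.Ioo (0:ℝ) 1,
        (f x : ℝ) + (g y : ℝ) =
          j ⟨Int.fract ((h x : ℝ) + (y : ℝ)),
             ⟨Int.fract_nonneg _, Int.fract_lt_one _⟩⟩ := by
  rintro ⟨f, g, -, -, hfg⟩
  have := neZero_volume_Ioo one_pos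
  have h_pres : MeasurePreserving h :=
    ⟨hh, Measure.ext fun A hA ↦ (Measure.map_apply hh hA).trans (hpres A hA)⟩
  exact no_measurable_solution_uniform_fract_general _
    (infinite_range_fract_of_quasiMeasurePreserving h_pres.quasiMeasurePreserving) j hj hjc
    ⟨fun x ↦ f x, fun y ↦ g y, hfg⟩
end

section
/- Let h : ℝ → ℝ be a Borel measurable map preserving the standard Cauchy measure, and let j : ℝ → ℝ be a Borel measurable map such that ℓ({x ∈ ℝ : j(x) = c}) < 1 for every c ∈ ℝ. Then there do not exist Borel measurable functions f, g : ℝ → ℝ such that f(x) + g(y) = j((h(x) + y)/(1 − h(x)·y)) for all x, y ∈ ℝ with 1 − h(x)·y ≠ 0. -/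
open MeasureTheory

/-- The standard Cauchy measure on `ℝ`: density `1/(π(1+x²))` w.r.t. Lebesgue measure. -/
noncomputable def stdCauchyMeasure : Measure ℝ :=
  volume.withDensity fun x => ENNReal.ofReal (1 / (Real.pi * (1 + x ^ 2)))

/-!
Write `T a y = (a + y) / (1 - a * y)`. Since `T (tan α) (tan β) = tan (α + β)`, the map `T a` is a
rotation in disguise, and it preserves the standard Cauchy measure. If `f x + g y = j (T (h x) y)`,
then under this measure `g + f x` has the law of `j`, whatever `x` is. A nonzero finite measure is
not invariant under a nonzero translation (by Poincaré recurrence), so `f` is constant. Putting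
`y = 0` shows that `j` is constant on the range of `h`. Since `h` preserves the Cauchy measure, `j`
is then almost everywhere constant, so one of its level sets has infinite Lebesgue measure.
-/

open Filter Set ProbabilityTheory
open scoped ENNReal

section Translation

variable {E : Type*} [NormedAddCommGroup E] [NormedSpace ℝ E] [SecondCountableTopology E]
  [MeasurableSpace E] [BorelSpace E]

theorem eq_zero_of_measurePreserving_add_right {ν : Measure E} [IsFiniteMeasure ν] [NeZero ν]
    {v : E} (hν : MeasurePreserving (· + v) ν ν) : v = 0 := by
  obtain ⟨x, hx⟩ := hν.conservative.ae_frequently_mem_of_mem_nhds.exists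
  have returns : ∃ᶠ n : ℕ in atTop, n * ‖v‖ < 1 := by
    simpa [add_right_iterate, ← Nat.cast_smul_eq_nsmul ℝ, norm_smul]
      using hx _ (Metric.ball_mem_nhds x one_pos)
  by_contra hv
  have escapes : Tendsto (fun n : ℕ ↦ n * ‖v‖) atTop atTop :=
    tendsto_natCast_atTop_atTop.atTop_mul_const (norm_pos_iff.mpr hv)
  exact returns ((escapes.eventually_ge_atTop 1).mono fun _ ↦ not_lt.mpr)

variable {Ω Ω' : Type*} [MeasurableSpace Ω] [MeasurableSpace Ω'] {μ : Measure Ω} {μ' : Measure Ω'}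
  [IsFiniteMeasure μ] [NeZero μ]

theorem eq_of_identDistrib_add_const {X : Ω → E} {u v : E}
    (hX : IdentDistrib (fun ω ↦ X ω + u) (fun ω ↦ X ω + v) μ μ) : u = v := by
  have hu := hX.aemeasurable_fst
  have : NeZero (μ.map fun ω ↦ X ω + u) := ⟨(Measure.map_ne_zero_iff hu).mpr (NeZero.ne μ)⟩
  have translate : MeasurePreserving (· + (v - u)) (μ.map fun ω ↦ X ω + u)
      (μ.map fun ω ↦ X ω + u) := by
    refine ⟨measurable_add_const _, ?_⟩
    rw [AEMeasurable.map_map_of_aemeasurable (measurable_add_const _).aemeasurable hu, hX.map_eq]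
    congr 1
    ext ω
    simp
  exact (sub_eq_zero.mp (eq_zero_of_measurePreserving_add_right translate)).symm

theorem eq_of_ae_add_const_eq_comp_measurePreserving {S T : Ω → Ω'}
    (hS : MeasurePreserving S μ μ') (hT : MeasurePreserving T μ μ')
    {j : Ω' → E} (hj : AEMeasurable j μ') {g : Ω → E} {u v : E}
    (hu : ∀ᵐ ω ∂μ, g ω + u = j (S ω)) (hv : ∀ᵐ ω ∂μ, g ω + v = j (T ω)) : u = v := by
  have law_eq {R : Ω → Ω'} (hR : MeasurePreserving R μ μ') {w : E}
      (hw : ∀ᵐ ω ∂μ, g ω + w = j (R ω)) : IdentDistrib j (fun ω ↦ g ω + w) μ' μ := by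
    have hjR : AEMeasurable (j ∘ R) μ := hj.comp_quasiMeasurePreserving hR.quasiMeasurePreserving
    refine IdentDistrib.trans ⟨hj, hjR, ?_⟩ (.of_ae_eq hjR (hw.mono fun _ ↦ Eq.symm))
    rw [← hR.map_eq, AEMeasurable.map_map_of_aemeasurable (hR.map_eq ▸ hj) hR.aemeasurable]
  exact eq_of_identDistrib_add_const ((law_eq hS hu).symm.trans (law_eq hT hv))

end Translation

theorem measurePreserving_withDensity_of_hasDerivWithinAt {T T' : ℝ → ℝ} {s : Set ℝ}
    {p q : ℝ → ℝ≥0∞} (hT : Measurable T) (hs : MeasurableSet s) (hs_ae : s =ᵐ[volume] univ)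
    (himage : T '' s =ᵐ[volume] univ) (hinj : InjOn T s)
    (hderiv : ∀ x ∈ s, HasDerivWithinAt T (T' x) s x)
    (hdensity : ∀ x ∈ s, ENNReal.ofReal |T' x| * q (T x) = p x) :
    MeasurePreserving T (volume.withDensity p) (volume.withDensity q) := by
  refine ⟨hT, Measure.ext fun B hB ↦ ?_⟩
  have hsB : MeasurableSet (s ∩ T ⁻¹' B) := hs.inter (hT hB)
  have hae {t : Set ℝ} (ht : t =ᵐ[volume] univ) (A : Set ℝ) : A =ᵐ[volume] (t ∩ A : Set ℝ) := by
    simpa using (ht.inter (ae_eq_refl A)).symm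
  rw [Measure.map_apply hT hB, withDensity_apply _ (hT hB), withDensity_apply _ hB]
  calc ∫⁻ x in T ⁻¹' B, p x
      = ∫⁻ x in s ∩ T ⁻¹' B, p x := setLIntegral_congr (hae hs_ae _)
    _ = ∫⁻ x in s ∩ T ⁻¹' B, ENNReal.ofReal |T' x| * q (T x) :=
        setLIntegral_congr_fun hsB fun x hx ↦ (hdensity x hx.1).symm
    _ = ∫⁻ y in T '' (s ∩ T ⁻¹' B), q y :=
        (lintegral_image_eq_lintegral_abs_deriv_mul hsB
          (fun x hx ↦ (hderiv x hx.1).mono inter_subset_left) (hinj.mono inter_subset_left) q).symm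
    _ = ∫⁻ y in T '' s ∩ B, q y := by rw [image_inter_preimage]
    _ = ∫⁻ y in B, q y := (setLIntegral_congr (hae himage B)).symm

section TanAdd

/-- The addition law of the tangent: `tan (α + β) = tanAdd (tan α) (tan β)`. At the pole
`1 - a * y = 0` it has the value `0`. -/
noncomputable def tanAdd (a y : ℝ) : ℝ :=
  (a + y) / (1 - a * y)

variable {a y : ℝ}

@[simp]
theorem tanAdd_zero_right (a : ℝ) : tanAdd a 0 = a := by
  simp [tanAdd]

theorem measurable_tanAdd (a : ℝ) : Measurable (tanAdd a) := by
  unfold tanAdd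
  fun_prop

theorem one_sub_neg_mul_tanAdd (hy : 1 - a * y ≠ 0) :
    1 - -a * tanAdd a y = (1 + a ^ 2) / (1 - a * y) := by
  unfold tanAdd
  field

theorem one_sub_neg_mul_tanAdd_ne_zero (hy : 1 - a * y ≠ 0) : 1 - -a * tanAdd a y ≠ 0 := by
  rw [one_sub_neg_mul_tanAdd hy]
  exact div_ne_zero (by positivity) hy

theorem tanAdd_neg_tanAdd (hy : 1 - a * y ≠ 0) : tanAdd (-a) (tanAdd a y) = y := by
  rw [tanAdd, div_eq_iff (one_sub_neg_mul_tanAdd_ne_zero hy), one_sub_neg_mul_tanAdd hy, tanAdd]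
  field

theorem one_add_tanAdd_sq (hy : 1 - a * y ≠ 0) :
    1 + tanAdd a y ^ 2 = (1 + a ^ 2) * (1 + y ^ 2) / (1 - a * y) ^ 2 := by
  unfold tanAdd
  field

theorem injOn_tanAdd (a : ℝ) : InjOn (tanAdd a) {y | 1 - a * y ≠ 0} :=
  LeftInvOn.injOn (f₁' := tanAdd (-a)) fun _ ↦ tanAdd_neg_tanAdd

theorem image_tanAdd (a : ℝ) : tanAdd a '' {y | 1 - a * y ≠ 0} = {z | 1 - -a * z ≠ 0} := by
  refine Subset.antisymm (image_subset_iff.mpr fun _ ↦ one_sub_neg_mul_tanAdd_ne_zero) ?_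
  intro z hz
  exact ⟨tanAdd (-a) z, by simpa using one_sub_neg_mul_tanAdd_ne_zero hz,
    by simpa using tanAdd_neg_tanAdd hz⟩

theorem hasDerivAt_tanAdd (hy : 1 - a * y ≠ 0) :
    HasDerivAt (tanAdd a) ((1 + a ^ 2) / (1 - a * y) ^ 2) y := by
  have hnum : HasDerivAt (fun y ↦ a + y) 1 y := (hasDerivAt_id y).const_add a
  have hden : HasDerivAt (fun y ↦ 1 - a * y) (-(a * 1)) y :=
    ((hasDerivAt_id y).const_mul a).const_sub 1
  exact (hnum.div hden hy).congr_deriv (by ring)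

theorem ae_one_sub_mul_ne_zero (a : ℝ) : ∀ᵐ y : ℝ, 1 - a * y ≠ 0 := by
  have hpole : {y : ℝ | 1 - a * y = 0} ⊆ {a⁻¹} := fun y hy ↦
    eq_inv_of_mul_eq_one_right (sub_eq_zero.mp hy).symm
  simpa [ae_iff] using measure_mono_null hpole Real.volume_singleton

end TanAdd

section StdCauchyMeasure

theorem stdCauchyMeasure_eq_cauchyMeasure : stdCauchyMeasure = cauchyMeasure 0 1 := by
  rw [stdCauchyMeasure, cauchyMeasure_of_scale_ne_zero 0 one_ne_zero]
  congr with x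
  simp [cauchyPDF, cauchyPDFReal, add_comm, mul_comm]

instance : IsProbabilityMeasure stdCauchyMeasure :=
  stdCauchyMeasure_eq_cauchyMeasure ▸ inferInstance

theorem stdCauchyMeasure_absolutelyContinuous_volume : stdCauchyMeasure ≪ volume :=
  withDensity_absolutelyContinuous _ _

theorem volume_absolutelyContinuous_stdCauchyMeasure : volume ≪ stdCauchyMeasure :=
  withDensity_absolutelyContinuous' (by fun_prop) <| .of_forall fun x ↦
    (ENNReal.ofReal_pos.mpr (by positivity)).ne'

theorem measurePreserving_tanAdd (a : ℝ) :
    MeasurePreserving (tanAdd a) stdCauchyMeasure stdCauchyMeasure := by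
  have hae (b : ℝ) : {y : ℝ | 1 - b * y ≠ 0} =ᵐ[volume] univ :=
    eventuallyEq_univ.mpr (ae_one_sub_mul_ne_zero b)
  refine measurePreserving_withDensity_of_hasDerivWithinAt (measurable_tanAdd a)
    (measurableSet_eq_fun (by fun_prop) measurable_const).compl (hae a)
    (image_tanAdd a ▸ hae (-a)) (injOn_tanAdd a)
    (fun y hy ↦ (hasDerivAt_tanAdd hy).hasDerivWithinAt) fun y (hy : 1 - a * y ≠ 0) ↦ ?_
  rw [abs_of_nonneg (by positivity), ← ENNReal.ofReal_mul (by positivity), one_add_tanAdd_sq hy]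
  congr 1
  field

end StdCauchyMeasure

section FunctionalEquation

variable {α E : Type*} [NormedAddCommGroup E] [NormedSpace ℝ E] [SecondCountableTopology E]
  [MeasurableSpace E] [BorelSpace E]

theorem comp_eq_comp_of_add_eq_comp_tanAdd {h : α → ℝ} {j : ℝ → E}
    (hj : AEMeasurable j) {f : α → E} {g : ℝ → E}
    (hfg : ∀ x y, 1 - h x * y ≠ 0 → f x + g y = j (tanAdd (h x) y)) (x x' : α) :
    j (h x) = j (h x') := by
  have hae (z : α) : ∀ᵐ y ∂stdCauchyMeasure, g y + f z = j (tanAdd (h z) y) :=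
    stdCauchyMeasure_absolutelyContinuous_volume.ae_le <|
      (ae_one_sub_mul_ne_zero (h z)).mono fun y hy ↦ (add_comm _ _).trans (hfg z y hy)
  have hf : f x = f x' :=
    eq_of_ae_add_const_eq_comp_measurePreserving (measurePreserving_tanAdd (h x))
      (measurePreserving_tanAdd (h x'))
      (hj.mono_ac stdCauchyMeasure_absolutelyContinuous_volume) (hae x) (hae x')
  have hzero (z : α) : f z + g 0 = j (h z) := by simpa using hfg z 0 (by simp)
  rw [← hzero x, ← hzero x', hf]

theorem no_measurable_solution_cauchy_general [MeasurableSpace α] {μ : Measure α} {h : α → ℝ}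
    (hac : volume ≪ μ.map h) {j : ℝ → E} (hj : Measurable j)
    (hjc : ∀ c, ¬ j =ᵐ[volume] fun _ ↦ c) :
    ¬ ∃ (f : α → E) (g : ℝ → E), ∀ x y, 1 - h x * y ≠ 0 →
      f x + g y = j ((h x + y) / (1 - h x * y)) := by
  rintro ⟨f, g, hfg⟩
  have hmap : μ.map h ≠ 0 := fun hzero ↦
    NeZero.ne volume (Measure.absolutelyContinuous_zero_iff.mp (hzero ▸ hac))
  have hh : AEMeasurable h μ := aemeasurable_of_map_neZero ⟨hmap⟩
  obtain ⟨x₀⟩ : Nonempty α := by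
    by_contra! hα
    exact hmap (by simp [Measure.eq_zero_of_isEmpty μ])
  refine hjc (j (h x₀)) (hac.ae_le ?_)
  exact (ae_map_iff hh (hj (measurableSet_singleton _))).mpr <|
    .of_forall fun x ↦ comp_eq_comp_of_add_eq_comp_tanAdd hj.aemeasurable hfg x x₀

end FunctionalEquation

theorem no_measurable_solution_cauchy
    (h : ℝ → ℝ) (hh : Measurable h)
    (hpres : Measure.map h stdCauchyMeasure = stdCauchyMeasure)
    (j : ℝ → ℝ) (hj : Measurable j)
    (hjc : ∀ c : ℝ, volume {x : ℝ | j x = c} < 1) :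
    ¬ ∃ f g : ℝ → ℝ, Measurable f ∧ Measurable g ∧
      ∀ x y : ℝ, 1 - h x * y ≠ 0 →
        f x + g y = j ((h x + y) / (1 - h x * y)) := by
  have hac : volume ≪ volume.map h :=
    (hpres.symm ▸ volume_absolutelyContinuous_stdCauchyMeasure).trans
      (stdCauchyMeasure_absolutelyContinuous_volume.map hh)
  have hconst (c : ℝ) : ¬ j =ᵐ[volume] fun _ ↦ c := fun hc ↦ by
    simpa [measure_congr (eventuallyEq_univ.mpr hc)] using hjc c
  rintro ⟨f, g, -, -, hfg⟩
  exact no_measurable_solution_cauchy_general hac hj hconst ⟨f, g, hfg⟩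
end

section
/- Let X and Y be real-valued random variables on a probability space. If X and Y are independent, and X + Y and Y are independent, then Y is almost surely constant: there exists a constant C ∈ ℝ such that P(Y = C) = 1. -/
open MeasureTheory ProbabilityTheory

/-!
If `Y` charged both `(-∞, a]` and `[b, ∞)` for some `a < b`, then conditioning on `Y ≤ a` and on
`b ≤ Y` would give `P(X ≤ s + (b - a)) ≤ P(X + Y ≤ s + b) ≤ P(X ≤ s)` for every `s`. Hence `X` would
not charge any interval `(s, s + (b - a)]`; countably many of these cover the line, which is absurd.
So `Y` never charges two separated half-lines, which forces it to be almost surely constant.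
-/

open Filter Set Topology

section EventuallyConst

variable {Ω α : Type*} [LinearOrder α] [TopologicalSpace α]

lemma exists_gt_Ici_mem_nhdsWithin_Ioi [ClosedIicTopology α] {q x : α} (hqx : q < x) :
    ∃ b > q, Ici b ∈ 𝓝[Ioi q] x := by
  by_cases hcov : q ⋖ x
  · exact ⟨x, hqx, hcov.Ioi_eq ▸ self_mem_nhdsWithin⟩
  · obtain ⟨b, hqb, hbx⟩ := (not_covBy_iff hqx).1 hcov
    exact ⟨b, hqb, mem_nhdsWithin_of_mem_nhds (Ici_mem_nhds hbx)⟩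

variable {l : Filter Ω} [CountableInterFilter l] {Y : Ω → α}

lemma eventually_le_of_forall_gt_eventually_lt [ClosedIicTopology α]
    [HereditarilyLindelofSpace α] {q : α} (h : ∀ b > q, ∀ᶠ ω in l, Y ω < b) :
    ∀ᶠ ω in l, Y ω ≤ q := by
  have hcompl : (Ioi q)ᶜ ∈ map Y l := by
    refine (HereditarilyLindelofSpace.isLindelof (Ioi q)).compl_mem_sets_of_nhdsWithin
      fun x hqx ↦ ?_
    obtain ⟨b, hqb, hb⟩ := exists_gt_Ici_mem_nhdsWithin_Ioi hqx
    exact ⟨Ici b, hb, (compl_Ici (a := b)).symm ▸ h b hqb⟩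
  rwa [compl_Ioi] at hcompl

lemma exists_eventuallyEq_const_of_forall_lt [OrderTopology α] [SecondCountableTopology α]
    [Nonempty α]
    (h : ∀ a b, a < b → (∀ᶠ ω in l, a < Y ω) ∨ ∀ᶠ ω in l, Y ω < b) :
    ∃ C, Y =ᶠ[l] Function.const Ω C := by
  refine exists_eventuallyEq_const_of_forall_separating (· ∈ range (Iic : α → Set α)) ?_
  rintro _ ⟨q, rfl⟩
  simp only [mem_Iic, not_le]
  by_cases hq : ∀ᶠ ω in l, q < Y ω
  · exact .inr hq
  · exact .inl <| eventually_le_of_forall_gt_eventually_lt fun b hb ↦ (h q b hb).resolve_left hq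

end EventuallyConst

section Independence

variable {Ω : Type*} {mΩ : MeasurableSpace Ω} {μ : Measure Ω} [IsFiniteMeasure μ]

lemma measure_preimage_le_of_indepFun_of_inter_subset {α β γ : Type*} [MeasurableSpace α]
    [MeasurableSpace β] [MeasurableSpace γ] {X : Ω → α} {Z : Ω → β} {Y : Ω → γ}
    (hX : IndepFun X Y μ) (hZ : IndepFun Z Y μ) {A : Set α} {B : Set β} {D : Set γ}
    (hA : MeasurableSet A) (hB : MeasurableSet B) (hD : MeasurableSet D)
    (hYD : μ (Y ⁻¹' D) ≠ 0) (hsub : X ⁻¹' A ∩ Y ⁻¹' D ⊆ Z ⁻¹' B) :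
    μ (X ⁻¹' A) ≤ μ (Z ⁻¹' B) := by
  rw [← ENNReal.mul_le_mul_iff_left hYD (measure_ne_top μ _),
    ← hX.measure_inter_preimage_eq_mul _ _ hA hD, ← hZ.measure_inter_preimage_eq_mul _ _ hB hD]
  exact measure_mono (subset_inter hsub inter_subset_right)

variable {G : Type*} [AddCommGroup G] [TopologicalSpace G] [MeasurableSpace G]
  [OpensMeasurableSpace G] {X Y : Ω → G} {a b : G}

lemma measure_preimage_Iic_add_sub_le [PartialOrder G] [IsOrderedAddMonoid G]
    [OrderClosedTopology G] (hXY : IndepFun X Y μ) (hXYY : IndepFun (X + Y) Y μ)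
    (ha : μ (Y ⁻¹' Iic a) ≠ 0) (hb : μ (Y ⁻¹' Ici b) ≠ 0) (s : G) :
    μ (X ⁻¹' Iic (s + (b - a))) ≤ μ (X ⁻¹' Iic s) := by
  calc μ (X ⁻¹' Iic (s + (b - a)))
      ≤ μ ((X + Y) ⁻¹' Iic (s + b)) := by
        refine measure_preimage_le_of_indepFun_of_inter_subset hXY hXYY measurableSet_Iic
          measurableSet_Iic measurableSet_Iic ha fun ω ⟨hXω, hYω⟩ ↦ ?_
        calc X ω + Y ω ≤ s + (b - a) + a := add_le_add hXω hYω
          _ = s + b := by abel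
    _ ≤ μ (X ⁻¹' Iic s) := by
        refine measure_preimage_le_of_indepFun_of_inter_subset hXYY hXY measurableSet_Iic
          measurableSet_Iic measurableSet_Ici hb fun ω ⟨hXYω, hYω⟩ ↦ ?_
        exact le_of_add_le_add_right (hXYω.trans (add_le_add_right hYω s))

variable [LinearOrder G] [IsOrderedAddMonoid G] [OrderClosedTopology G]

lemma measure_preimage_Ioc_add_sub_eq_zero (hX : AEMeasurable X μ) (hXY : IndepFun X Y μ)
    (hXYY : IndepFun (X + Y) Y μ) (hab : a ≤ b) (ha : μ (Y ⁻¹' Iic a) ≠ 0)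
    (hb : μ (Y ⁻¹' Ici b) ≠ 0) (s : G) :
    μ (X ⁻¹' Ioc s (s + (b - a))) = 0 := by
  have hsub : X ⁻¹' Iic s ⊆ X ⁻¹' Iic (s + (b - a)) :=
    preimage_mono <| Iic_subset_Iic.2 <| le_add_of_nonneg_right <| sub_nonneg.2 hab
  have hae : X ⁻¹' Iic s =ᵐ[μ] X ⁻¹' Iic (s + (b - a)) :=
    ae_eq_of_subset_of_measure_ge hsub (measure_preimage_Iic_add_sub_le hXY hXYY ha hb s)
      (hX.nullMeasurableSet_preimage measurableSet_Iic) (measure_ne_top μ _)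
  rw [← Iic_sdiff_Iic, preimage_sdiff]
  exact ae_le_set.1 hae.symm.le

lemma measure_preimage_Iic_eq_zero_or_measure_preimage_Ici_eq_zero [Archimedean G]
    (hX : AEMeasurable X μ) (hXY : IndepFun X Y μ) (hXYY : IndepFun (X + Y) Y μ) (hab : a < b) :
    μ (Y ⁻¹' Iic a) = 0 ∨ μ (Y ⁻¹' Ici b) = 0 := by
  by_contra! ⟨ha, hb⟩
  have hcover : ⋃ n : ℤ, X ⁻¹' Ioc (n • (b - a)) (n • (b - a) + (b - a)) = univ := by
    simp only [← add_one_zsmul, ← preimage_iUnion, iUnion_Ioc_zsmul (sub_pos.2 hab), preimage_univ]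
  have huniv : μ univ = 0 := hcover ▸ measure_iUnion_null fun n : ℤ ↦
    measure_preimage_Ioc_add_sub_eq_zero hX hXY hXYY hab.le ha hb (n • (b - a))
  exact ha (measure_mono_null (subset_univ _) huniv)

end Independence

theorem dirac_characterization_general {Ω G : Type*} {mΩ : MeasurableSpace Ω} {μ : Measure Ω}
    [IsFiniteMeasure μ] [AddCommGroup G] [LinearOrder G] [IsOrderedAddMonoid G] [Archimedean G]
    [TopologicalSpace G] [OrderTopology G] [SecondCountableTopology G] [MeasurableSpace G]
    [OpensMeasurableSpace G] {X Y : Ω → G} (hX : AEMeasurable X μ)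
    (hXY : IndepFun X Y μ) (hXYY : IndepFun (X + Y) Y μ) :
    ∃ C : G, Y =ᵐ[μ] Function.const Ω C := by
  refine exists_eventuallyEq_const_of_forall_lt fun a b hab ↦ ?_
  simpa only [ae_iff, not_lt, preimage, mem_Iic, mem_Ici] using
    measure_preimage_Iic_eq_zero_or_measure_preimage_Ici_eq_zero hX hXY hXYY hab

theorem dirac_characterization
    {Ω : Type*} [MeasureSpace Ω] [IsProbabilityMeasure (ℙ : Measure Ω)]
    (X Y : Ω → ℝ) (hX : Measurable X) (hY : Measurable Y)
    (hXY : IndepFun X Y) (hXYY : IndepFun (X + Y) Y) :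
    ∃ C : ℝ, ℙ {ω | Y ω = C} = 1 := by
  obtain ⟨C, hC⟩ := dirac_characterization_general hX.aemeasurable hXY hXYY
  exact ⟨C, (mem_ae_iff_prob_eq_one (hY (measurableSet_singleton C))).1 hC⟩
end

section
/- Every Borel measurable function f : ℝ → ℝ satisfying f(x) + f(y) = f((x + y)/(1 − x·y)) for all x, y ∈ ℝ with x·y ≠ 1 is identically zero: f(x) = 0 for every x ∈ ℝ. -/
/-!
Put `F t = f (tan t)` on the circle `ℝ / πℤ`. For every `r` other than the pole of `tan`, the arctan
equation says that `F (r + s) = F r + F s` for all but two points `s`. If `n • r = 0`, iterating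
this at a generic `s` gives `F s = n • F r + F s`, so `F r = 0`. Hence `F` is a.e. invariant under
translation by a dense set of torsion points, and by ergodicity it is a.e. equal to a constant `c`.
Then for any `r` other than the pole, `c = F r + c`, which forces `F r = 0`.
-/

open MeasureTheory Measure Filter Set

/-- `F` is additive at `r` up to a null set of second arguments. This is what the arctan equation
becomes under `x = tan r`, `y = tan s`, where the pole of the tangent rules out full additivity. -/
def AEAdditiveAt {A G : Type*} [Add A] [Add G] [MeasurableSpace A] (μ : Measure A) (F : A → G)
    (r : A) : Prop :=
  ∀ᵐ s ∂μ, F (r + s) = F r + F s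

namespace AEAdditiveAt

section Translation

variable {A G : Type*} [AddMonoid A] [MeasurableSpace A] [MeasurableAdd A] {μ : Measure A}
  [μ.IsAddLeftInvariant] {F : A → G} {r : A}

theorem ae_nsmul_add [AddMonoid G] (h : AEAdditiveAt μ F r) (n : ℕ) :
    ∀ᵐ s ∂μ, F (n • r + s) = n • F r + F s := by
  induction n with
  | zero => simp
  | succ n ih =>
    have ih_shift : ∀ᵐ s ∂μ, F (n • r + (r + s)) = n • F r + F (r + s) :=
      (measurePreserving_add_left μ r).quasiMeasurePreserving.ae ih
    filter_upwards [h, ih_shift] with s hs hn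
    rw [succ_nsmul, succ_nsmul, add_assoc, hn, hs, add_assoc]

theorem eq_zero_of_isOfFinAddOrder [AddRightCancelMonoid G] [IsAddTorsionFree G] [NeZero μ]
    (h : AEAdditiveAt μ F r) (hr : IsOfFinAddOrder r) : F r = 0 := by
  obtain ⟨n, hn, hnr⟩ := isOfFinAddOrder_iff_nsmul_eq_zero.mp hr
  obtain ⟨s, hs⟩ := (h.ae_nsmul_add n).exists
  rw [hnr, zero_add, right_eq_add] at hs
  exact (nsmul_eq_zero_iff_right hn.ne').mp hs

end Translation

end AEAdditiveAt

section Ergodic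

variable {A G : Type*} [AddGroup A] [TopologicalSpace A] [IsTopologicalAddGroup A]
  [MeasurableSpace A] [BorelSpace A] [MeasurableAdd₂ A] {μ : Measure A} [IsFiniteMeasure μ]
  [μ.InnerRegular] [μ.IsAddLeftInvariant] [MeasurableSpace G] [MeasurableSpace.CountablySeparated G]
  {F : A → G}

theorem exists_ae_eq_const_of_dense_setOfPred_ae_eq_add_left [Nonempty G] (hF : NullMeasurable F μ)
    (hd : Dense {r : A | ∀ᵐ s ∂μ, F (r + s) = F s}) : ∃ c, F =ᵐ[μ] Function.const A c := by
  refine exists_eventuallyEq_const_of_forall_separating MeasurableSet fun U hU ↦ ?_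
  have h_invariant : Dense {r : A | (r +ᵥ ·) ⁻¹' (F ⁻¹' U) =ᵐ[μ] F ⁻¹' U} :=
    hd.mono fun r hr ↦ mem_ofPred.2 (EventuallyEq.preimage (mem_ofPred.1 hr) U)
  exact eventuallyConst_set.mp (aeconst_of_dense_setOfPred_preimage_vadd_ae (hF hU) h_invariant)

theorem AEAdditiveAt.eq_zero [AddRightCancelMonoid G] [IsAddTorsionFree G] [NeZero μ] {r : A}
    (hr : AEAdditiveAt μ F r) (hF : NullMeasurable F μ)
    (hd : Dense {t : A | IsOfFinAddOrder t ∧ AEAdditiveAt μ F t}) : F r = 0 := by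
  have h_invariant : Dense {t : A | ∀ᵐ s ∂μ, F (t + s) = F s} := by
    refine hd.mono ?_
    rintro t ⟨ht, hadd⟩
    filter_upwards [hadd] with s hs
    rw [hs, hadd.eq_zero_of_isOfFinAddOrder ht, zero_add]
  obtain ⟨c, hc⟩ := exists_ae_eq_const_of_dense_setOfPred_ae_eq_add_left hF h_invariant
  have hc_shift : ∀ᵐ s ∂μ, F (r + s) = c := (eventually_add_left_iff μ r).mpr hc
  obtain ⟨s, hrs, hs, hs'⟩ := (hr.and (hc.and hc_shift)).exists
  rwa [hs', hs, Function.const_apply, right_eq_add] at hrs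

end Ergodic

theorem dense_setOfPred_isOfFinAddOrder_addCircle (p : ℝ) [Fact (0 < p)] :
    Dense {t : AddCircle p | IsOfFinAddOrder t} := by
  have hp : p ≠ 0 := (Fact.out : 0 < p).ne'
  have h_mul : Function.Surjective fun x : ℝ ↦ x * p := fun x ↦ ⟨x / p, div_mul_cancel₀ x hp⟩
  have h_cont : Continuous fun x : ℝ ↦ ((x * p : ℝ) : AddCircle p) :=
    (AddCircle.continuous_mk' p).comp (continuous_mul_const p)
  have h_dense : DenseRange fun q : ℚ ↦ (((q : ℝ) * p : ℝ) : AddCircle p) :=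
    (QuotientAddGroup.mk_surjective.comp h_mul).denseRange.comp Rat.denseRange_cast h_cont
  refine h_dense.mono ?_
  rintro _ ⟨q, rfl⟩
  exact AddCircle.isOfFinAddOrder_iff_exists_rat_eq_div.mpr ⟨q, (mul_div_cancel_right₀ _ hp).symm⟩

open Real

instance fact_zero_lt_pi : Fact (0 < π) := ⟨pi_pos⟩

theorem cos_eq_zero_iff_coe_eq_pi_div_two (t : ℝ) :
    cos t = 0 ↔ (t : AddCircle π) = (π / 2 : ℝ) := by
  rw [cos_eq_zero_iff, QuotientAddGroup.eq_iff_sub_mem, AddSubgroup.mem_zmultiples_iff]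
  refine exists_congr fun k ↦ ?_
  rw [zsmul_eq_mul]
  constructor <;> intro h <;> linarith

instance nontrivial_addCircle_pi : Nontrivial (AddCircle π) :=
  ⟨(0 : ℝ), (π / 2 : ℝ), fun h ↦
    one_ne_zero (cos_zero.symm.trans ((cos_eq_zero_iff_coe_eq_pi_div_two 0).mpr h))⟩

theorem tan_mul_tan_ne_one {s t : ℝ} (hs : cos s ≠ 0) (ht : cos t ≠ 0) (hst : cos (s + t) ≠ 0) :
    tan s * tan t ≠ 1 := by
  intro h
  apply hst
  rw [cos_add, ← tan_mul_cos hs, ← tan_mul_cos ht]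
  linear_combination -(cos s * cos t) * h

/-- The tangent as a function on the circle `ℝ / πℤ`, with the value `0` at its pole `π / 2`. -/
noncomputable def circleTan : AddCircle π → ℝ :=
  tan_periodic.lift

theorem circleTan_coe (t : ℝ) : circleTan t = tan t :=
  tan_periodic.lift_coe t

theorem measurable_circleTan : Measurable circleTan := by
  have h_tan : Measurable tan := by
    rw [funext tan_eq_sin_div_cos]
    exact measurable_sin.div measurable_cos
  exact measurable_from_quotient.mpr h_tan

theorem preimage_tan_inter_Ioo (s : Set ℝ) : tan ⁻¹' s ∩ Ioo (-(π / 2)) (π / 2) = arctan '' s := by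
  ext t
  constructor
  · rintro ⟨ht, h1, h2⟩
    exact ⟨tan t, ht, arctan_tan h1 h2⟩
  · rintro ⟨x, hx, rfl⟩
    exact ⟨by rwa [mem_preimage, tan_arctan], arctan_mem_Ioo x⟩

theorem quasiMeasurePreserving_circleTan : QuasiMeasurePreserving circleTan := by
  refine ⟨measurable_circleTan, AbsolutelyContinuous.mk fun s hs h_null ↦ ?_⟩
  have h_image : volume (arctan '' s) = 0 :=
    addHaar_image_eq_zero_of_differentiableOn_of_addHaar_eq_zero volume
      differentiable_arctan.differentiableOn h_null
  have h_period : Ioo (-(π / 2)) (π / 2) =ᵐ[volume] Ioc (-(π / 2)) (-(π / 2) + π) := by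
    rw [show -(π / 2) + π = π / 2 by ring]
    exact Ioo_ae_eq_Ioc
  rw [map_apply measurable_circleTan hs,
    ← (AddCircle.measurePreserving_mk π (-(π / 2))).measure_preimage
      (measurable_circleTan hs).nullMeasurableSet,
    ← restrict_congr_set h_period, restrict_apply' measurableSet_Ioo]
  exact (congrArg volume (preimage_tan_inter_Ioo s)).trans h_image

/-- The arctan equation for a function `f` on a field. -/
def SatisfiesArctanEquation {K G : Type*} [Field K] [Add G] (f : K → G) : Prop :=
  ∀ x y : K, x * y ≠ 1 → f x + f y = f ((x + y) / (1 - x * y))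

namespace SatisfiesArctanEquation

variable {G : Type*} {f : ℝ → G}

theorem map_tan_add [Add G] (hf : SatisfiesArctanEquation f) {s t : ℝ} (hs : cos s ≠ 0)
    (ht : cos t ≠ 0) (hst : cos (s + t) ≠ 0) : f (tan (s + t)) = f (tan s) + f (tan t) := by
  rw [hf _ _ (tan_mul_tan_ne_one hs ht hst),
    tan_add' ⟨cos_ne_zero_iff.mp hs, cos_ne_zero_iff.mp ht⟩]

theorem map_circleTan_add [Add G] (hf : SatisfiesArctanEquation f) {r s : AddCircle π}
    (hr : r ≠ (π / 2 : ℝ)) (hs : s ≠ (π / 2 : ℝ)) (hrs : r + s ≠ (π / 2 : ℝ)) :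
    f (circleTan (r + s)) = f (circleTan r) + f (circleTan s) := by
  induction r using QuotientAddGroup.induction_on with | H r => ?_
  induction s using QuotientAddGroup.induction_on with | H s => ?_
  rw [← AddCircle.coe_add] at hrs ⊢
  rw [Ne, ← cos_eq_zero_iff_coe_eq_pi_div_two] at hr hs hrs
  simp only [circleTan_coe]
  exact hf.map_tan_add hr hs hrs

theorem aeAdditiveAt_comp_circleTan [Add G] (hf : SatisfiesArctanEquation f) {r : AddCircle π}
    (hr : r ≠ (π / 2 : ℝ)) : AEAdditiveAt volume (f ∘ circleTan) r := by
  have ae_ne (c : AddCircle π) : ∀ᵐ s, s ≠ c :=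
    measure_eq_zero_iff_ae_notMem.mp (measure_singleton c)
  filter_upwards [ae_ne (π / 2 : ℝ), ae_ne ((π / 2 : ℝ) - r)] with s hs hrs
  exact hf.map_circleTan_add hr hs (mt eq_sub_of_add_eq' hrs)

theorem dense_setOfPred_isOfFinAddOrder_and_aeAdditiveAt [Add G] (hf : SatisfiesArctanEquation f) :
    Dense {t : AddCircle π | IsOfFinAddOrder t ∧ AEAdditiveAt volume (f ∘ circleTan) t} := by
  refine ((dense_setOfPred_isOfFinAddOrder_addCircle π).sdiff_singleton (π / 2 : ℝ)).mono ?_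
  rintro t ⟨ht, h_pole⟩
  exact ⟨ht, hf.aeAdditiveAt_comp_circleTan h_pole⟩

end SatisfiesArctanEquation

theorem arctan_equation_measurable_solution_zero_general {G : Type*} [AddRightCancelMonoid G]
    [IsAddTorsionFree G] [MeasurableSpace G] [MeasurableSpace.CountablySeparated G] {f : ℝ → G}
    (hf : NullMeasurable f) (hfe : SatisfiesArctanEquation f) (x : ℝ) : f x = 0 := by
  have h_meas : NullMeasurable (f ∘ circleTan) :=
    hf.comp_quasiMeasurePreserving quasiMeasurePreserving_circleTan
  have h_pole : (arctan x : AddCircle π) ≠ (π / 2 : ℝ) := by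
    rw [Ne, ← cos_eq_zero_iff_coe_eq_pi_div_two]
    exact (cos_arctan_pos x).ne'
  have h_zero : f (circleTan (arctan x)) = 0 :=
    (hfe.aeAdditiveAt_comp_circleTan h_pole).eq_zero h_meas
      hfe.dense_setOfPred_isOfFinAddOrder_and_aeAdditiveAt
  rwa [circleTan_coe, tan_arctan] at h_zero

theorem arctan_equation_measurable_solution_zero
    (f : ℝ → ℝ) (hf : Measurable f)
    (hfe : ∀ x y : ℝ, x * y ≠ 1 → f x + f y = f ((x + y) / (1 - x * y))) :
    ∀ x : ℝ, f x = 0 :=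
  arctan_equation_measurable_solution_zero_general hf.nullMeasurable hfe
end

section
/- Let f : ℝ → ℝ be a Borel measurable function satisfying the arctan equation f(x) + f(y) = f((x + y)/(1 − x·y)) for all x, y ∈ ℝ with x·y ≠ 1, and suppose f(y) = 0 for Lebesgue-almost every y ∈ ℝ. Then f(x) = 0 for every x ∈ ℝ (not just almost every x). -/
open MeasureTheory

/-!
Fix `x`. The Möbius map `y ↦ (x + y) / (1 - x * y)` has a differentiable inverse, so it pulls null
sets back to null sets. Hence almost every `y` satisfies both `f y = 0` and
`f ((x + y) / (1 - x * y)) = 0`, and the equation at a single such `y` forces `f x = 0`.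
-/

theorem quasiMeasurePreserving_of_ae_leftInverse {E : Type*} [NormedAddCommGroup E]
    [NormedSpace ℝ E] [FiniteDimensional ℝ E] [MeasurableSpace E] [BorelSpace E]
    {μ : Measure E} [μ.IsAddHaarMeasure] {φ ψ : E → E} {s : Set E} (hφ : Measurable φ)
    (hψ : DifferentiableOn ℝ ψ s) (hψφ : ∀ᵐ x ∂μ, φ x ∈ s ∧ ψ (φ x) = x) :
    Measure.QuasiMeasurePreserving φ μ μ := by
  refine ⟨hφ, .mk fun t ht hμt => ?_⟩
  rw [Measure.map_apply hφ ht]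
  have image_null : μ (ψ '' (t ∩ s)) = 0 :=
    addHaar_image_eq_zero_of_differentiableOn_of_addHaar_eq_zero μ
      (hψ.mono Set.inter_subset_right) (measure_inter_null_of_null_left s hμt)
  refine measure_mono_null_ae ?_ image_null
  filter_upwards [hψφ] with x ⟨hxs, hx⟩ hxt
  exact ⟨φ x, ⟨hxt, hxs⟩, hx⟩

theorem ae_mul_add_ne_zero {R : Type*} [Ring R] [NoZeroDivisors R] [MeasurableSpace R]
    {μ : Measure R} [NullSingletonClass μ] {c d : R} (hcd : c ≠ 0 ∨ d ≠ 0) :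
    ∀ᵐ y ∂μ, c * y + d ≠ 0 := by
  refine Set.Subsingleton.measure_zero (s := {y | ¬ c * y + d ≠ 0}) (fun y hy z hz => ?_) μ
  replace hy : c * y + d = 0 := not_not.mp hy
  replace hz : c * z + d = 0 := not_not.mp hz
  have hc : c ≠ 0 := by
    rintro rfl
    simp_all
  exact mul_left_cancel₀ hc (add_right_cancel (hy.trans hz.symm))

theorem quasiMeasurePreserving_moebius {a b c d : ℝ} (hdet : a * d - b * c ≠ 0) :
    Measure.QuasiMeasurePreserving (fun y : ℝ => (a * y + b) / (c * y + d)) := by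
  have hcd : c ≠ 0 ∨ d ≠ 0 := by
    by_contra! h
    simp [h] at hdet
  have inverse_differentiable :
      DifferentiableOn ℝ (fun z => (d * z - b) / (a - c * z)) {z | a - c * z ≠ 0} :=
    DifferentiableOn.div (by fun_prop) (by fun_prop) fun _ hz => hz
  refine quasiMeasurePreserving_of_ae_leftInverse (by fun_prop) inverse_differentiable ?_
  filter_upwards [ae_mul_add_ne_zero hcd] with y hy
  have denominator_eq :
      a - c * ((a * y + b) / (c * y + d)) = (a * d - b * c) / (c * y + d) := by
    field_simp
    ring
  have numerator_eq :
      d * ((a * y + b) / (c * y + d)) - b = (a * d - b * c) * y / (c * y + d) := by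
    rw [eq_div_iff hy, sub_mul, mul_assoc, div_mul_cancel₀ _ hy]
    ring
  refine ⟨denominator_eq ▸ div_ne_zero hdet hy, ?_⟩
  rw [denominator_eq, numerator_eq, div_div_div_cancel_right₀ hy, mul_div_cancel_left₀ y hdet]

theorem arctan_equation_ae_zero_eq_zero_general {M : Type*} [AddZeroClass M] (f : ℝ → M)
    (hfe : ∀ x y : ℝ, x * y ≠ 1 → f x + f y = f ((x + y) / (1 - x * y)))
    (h0 : ∀ᵐ y ∂(volume : Measure ℝ), f y = 0) :
    ∀ x : ℝ, f x = 0 := by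
  intro x
  have hdet : (1 : ℝ) * 1 - x * -x ≠ 0 := by nlinarith [sq_nonneg x]
  have sum_zero : ∀ᵐ y : ℝ, f ((1 * y + x) / (-x * y + 1)) = 0 :=
    (quasiMeasurePreserving_moebius hdet).ae h0
  have defined : ∀ᵐ y : ℝ, -x * y + 1 ≠ 0 := ae_mul_add_ne_zero (.inr one_ne_zero)
  obtain ⟨y, hy, hxy, hne⟩ := (h0.and (sum_zero.and defined)).exists
  calc
    f x = f x + f y := by rw [hy, add_zero]
    _ = f ((x + y) / (1 - x * y)) := hfe x y fun h => hne (by linarith)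
    _ = f ((1 * y + x) / (-x * y + 1)) := by ring_nf
    _ = 0 := hxy

theorem arctan_equation_ae_zero_eq_zero
    (f : ℝ → ℝ) (hf : Measurable f)
    (hfe : ∀ x y : ℝ, x * y ≠ 1 → f x + f y = f ((x + y) / (1 - x * y)))
    (h0 : ∀ᵐ y ∂(volume : Measure ℝ), f y = 0) :
    ∀ x : ℝ, f x = 0 :=
  arctan_equation_ae_zero_eq_zero_general f hfe h0
end
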